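/- Let T = {L_1,…,L_r} be an r-set with ⋃_{i=1}^r L_i = {1,…,n} and ⋂_{i=1}^r L_i = ∅, and let r' be an integer with 0 ≤ r' < r. If there exist n − k − r' translations t_1,…,t_{n−k−r'} ∈ ⋂_{i=1}^r D_{L_i} whose K_T-vector sets are weakly linearly independent, then dim_ℂ (⋂_{i=1}^r D_{L_i}) ≥ n − r' > n − r; in particular, the codimension in ℂ^n of the intersection of the r discriminantal hyperplanes D_{L_1},…,D_{L_r} is strictly smaller than r. -/

import Mathlib

open Matrix

/-- `Dsub k n α L` is the set of translations `t ∈ ℂⁿ` such that the affine hyperplanes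
`H_i^{t_i} = {x : α_i ⬝ x = t_i}`, `i ∈ L`, have a common point. -/
def Dsub (k n : ℕ) (α : Fin n → Fin k → ℂ) (L : Finset (Fin n)) : Set (Fin n → ℂ) :=
  {t | ∃ p : Fin k → ℂ, ∀ i ∈ L, α i ⬝ᵥ p = t i}

/-- A vector annihilated by at least `k` members of a generic family in `ℂᵏ` is zero. -/
lemma eq_zero_of_generic {k n : ℕ} {α : Fin n → Fin k → ℂ}
    (hgen : ∀ S : Finset (Fin n), S.card = k → LinearIndependent ℂ (fun i : S => α i.1))
    {L : Finset (Fin n)} (hL : k ≤ L.card) {x : Fin k → ℂ}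
    (hx : ∀ i ∈ L, α i ⬝ᵥ x = 0) : x = 0 := by
  obtain ⟨S, hSL, hS⟩ := Finset.exists_subset_card_eq hL
  have hspan : Submodule.span ℂ (Set.range fun i : S => α i.1) = ⊤ :=
    (hgen S hS).span_eq_top_of_card_eq_finrank' (by simp [hS])
  refine dotProduct_eq_zero x fun w => ?_
  have hw : w ∈ Submodule.span ℂ (Set.range fun i : S => α i.1) := hspan ▸ Submodule.mem_top
  rw [dotProduct_comm]
  induction hw using Submodule.span_induction with
  | mem y hy => obtain ⟨i, rfl⟩ := hy; exact hx i (hSL i.2)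
  | zero => simp
  | add y z _ _ hy hz => rw [add_dotProduct, hy, hz, add_zero]
  | smul c y _ hy => rw [smul_dotProduct, hy, smul_zero]

/-- The discriminantal set `Dsub k n α L` as a linear subspace. -/
def DsubSubmodule (k n : ℕ) (α : Fin n → Fin k → ℂ) (L : Finset (Fin n)) :
    Submodule ℂ (Fin n → ℂ) where
  carrier := Dsub k n α L
  zero_mem' := ⟨0, by simp⟩
  add_mem' := by
    rintro s t ⟨p, hp⟩ ⟨q, hq⟩
    exact ⟨p + q, fun i hi => by rw [dotProduct_add, hp i hi, hq i hi, Pi.add_apply]⟩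
  smul_mem' := by
    rintro c t ⟨p, hp⟩
    exact ⟨c • p, fun i hi => by rw [dotProduct_smul, hp i hi, Pi.smul_apply]⟩

/-- If an `r`-set `T` with `⋃ L_i = [n]` and `⋂ L_i = ∅` admits `n - k - r'` translations
with weakly linearly independent `K_T`-vector sets (`r' < r`), then
`dim (⋂ D_{L_i}) ≥ n - r' > n - r`, i.e. the codimension of the intersection of the `r`
discriminantal hyperplanes is strictly smaller than `r`.  Here `P h i` represents the
(unique) point `P_{L_i}(t_h)`, so `v_{i₀,j}(t_h) = P h j - P h i₀`. -/
theorem stmt_10 (k n : ℕ) (hk : 0 < k) (hkn : k < n)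
    (α : Fin n → Fin k → ℂ)
    (hgen : ∀ S : Finset (Fin n), S.card = k →
      LinearIndependent ℂ (fun i : S => α i.1))
    (r : ℕ) (L : Fin r → Finset (Fin n))
    (hcard : ∀ i, (L i).card = k + 1)
    (hpair : ∀ i j, i ≠ j → (L i ∩ L j).Nonempty)
    (hrset : ∀ I : Finset (Fin r), I.card = r - 1 →
      I.biUnion L = Finset.univ.biUnion L)
    (hunion : Finset.univ.biUnion L = Finset.univ)
    (hinter : (Finset.univ.inf L : Finset (Fin n)) = ∅)
    (r' : ℕ) (hr' : r' < r)
    (i₀ : Fin r)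
    (t : Fin (n - k - r') → Fin n → ℂ)
    (ht : ∀ h, t h ∈ ⋂ i : Fin r, Dsub k n α (L i))
    (P : Fin (n - k - r') → Fin r → Fin k → ℂ)
    (hP : ∀ (h : Fin (n - k - r')) (i : Fin r), ∀ p ∈ L i, α p ⬝ᵥ P h i = t h p)
    (hwli : ∀ a : Fin (n - k - r') → ℂ,
      (∀ j : Fin r, j ≠ i₀ → ∑ h, a h • (P h j - P h i₀) = 0) →
      ∀ h, a h = 0) :
    ∃ W : Submodule ℂ (Fin n → ℂ),
      (W : Set (Fin n → ℂ)) = ⋂ i : Fin r, Dsub k n α (L i) ∧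
      n - r' ≤ Module.finrank ℂ W ∧ n - r < Module.finrank ℂ W := by
  let W : Submodule ℂ (Fin n → ℂ) := ⨅ i, DsubSubmodule k n α (L i)
  have hW : (W : Set (Fin n → ℂ)) = ⋂ i : Fin r, Dsub k n α (L i) := by
    simp only [W, Submodule.coe_iInf]; rfl
  have hL : ∀ i, k ≤ (L i).card := fun i => by rw [hcard i]; exact k.le_succ
  let f : (Fin k → ℂ) × (Fin (n - k - r') → ℂ) →ₗ[ℂ] (Fin n → ℂ) :=
    (Matrix.mulVecLin (Matrix.of α)).coprod (Fintype.linearCombination ℂ t)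
  have hf : ∀ x a p, f (x, a) p = α p ⬝ᵥ x + ∑ h, a h * t h p := fun x a p => by
    simp [f, Fintype.linearCombination_apply, Matrix.mulVec]
  have hpoint : ∀ x a i, ∀ p ∈ L i, α p ⬝ᵥ (x + ∑ h, a h • P h i) = f (x, a) p := by
    intro x a i p hp
    simp [hf, dotProduct_add, dotProduct_sum, dotProduct_smul, hP _ i p hp]
  have hfW : ∀ y, f y ∈ W := fun y =>
    (Submodule.mem_iInf _).2 fun i => ⟨_, hpoint y.1 y.2 i⟩
  have hinj : Function.Injective (f.codRestrict W hfW) := by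
    rw [← LinearMap.ker_eq_bot, LinearMap.ker_codRestrict, LinearMap.ker_eq_bot']
    rintro ⟨x, a⟩ h0
    have hzero : ∀ i, x + ∑ h, a h • P h i = 0 := fun i =>
      eq_zero_of_generic hgen (hL i) fun p hp => by rw [hpoint x a i p hp, h0, Pi.zero_apply]
    have ha : a = 0 := funext <| hwli a fun j _ => by
      simp only [smul_sub, Finset.sum_sub_distrib]
      rw [sub_eq_zero]
      exact add_left_cancel ((hzero j).trans (hzero i₀).symm)
    have hx := hzero i₀
    subst ha
    simpa using hx
  have hdim := LinearMap.finrank_le_finrank_of_injective hinj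
  rw [Module.finrank_prod, Module.finrank_fin_fun, Module.finrank_fin_fun] at hdim
  exact ⟨W, hW, by omega, by omega⟩
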